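/- Let t, n', i' be positive integers and set n = t·n', i = t·i'. Then the number of d ∈ {1,−1}^n with ζ_n^i(d) = d equals the t-th power of the number of e ∈ {1,−1}^{n'} with ζ_{n'}^{i'}(e) = e. -/

import Mathlib

/-- The signed cyclic shift `ζ_N` on `{±1}^N`: `(ζ d)_0 = -d_{N-1}` and `(ζ d)_k = d_{k-1}`
for `k ≥ 1` (0-based indexing). -/
def zeta (N : ℕ) (d : Fin N → ℤˣ) : Fin N → ℤˣ := fun k =>
  if (k : ℕ) = 0 then -d ⟨N - 1, Nat.sub_lt k.pos Nat.one_pos⟩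
  else d ⟨(k : ℕ) - 1, Nat.lt_of_le_of_lt (Nat.sub_le _ _) k.isLt⟩

/-!
Replace the sign change by an arbitrary self-map `σ` of an alphabet. Cutting a word of length
`n * t` into its residue classes modulo `t` gives a word of length `t` whose letters are words of
length `n`. A shift moves each class to the next one, and the last class, on wrapping around to the
front, is itself shifted by one place: the `σ`-twisted shift of length `n * t` is the shift of
length `t` twisted by the `σ`-twisted shift of length `n`. Since `t` shifts of a word of length `t`
apply the twist once to each letter, the word is fixed by `t * i` shifts exactly when each of its
`t` residue classes is fixed by `i` shifts.
-/

variable {α : Type*}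

/-- The cyclic shift of words of length `N` that applies `σ` to the letter wrapping around from the
last place to the first. Letters of any type are allowed so that the twist can itself be a twisted
shift of shorter words. -/
def twistedShift (σ : α → α) (N : ℕ) (d : Fin N → α) : Fin N → α := fun k =>
  if (k : ℕ) = 0 then σ (d ⟨N - 1, Nat.sub_lt k.pos Nat.one_pos⟩) else d ⟨k - 1, by omega⟩

theorem zeta_eq_twistedShift (N : ℕ) : zeta N = twistedShift Neg.neg N :=
  rfl

section Iterate

variable (σ : α → α) (N : ℕ)

theorem twistedShift_iterate_apply {j : ℕ} (hj : j ≤ N) (d : Fin N → α) (k : Fin N) :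
    (twistedShift σ N)^[j] d k =
      if h : (k : ℕ) < j then σ (d ⟨k + N - j, by omega⟩) else d ⟨k - j, by omega⟩ := by
  induction j generalizing k with
  | zero => simp
  | succ j ih =>
    simp only [Function.iterate_succ_apply', twistedShift, ih (Nat.le_of_succ_le hj)]
    grind

theorem twistedShift_iterate_self : (twistedShift σ N)^[N] = Pi.map fun _ => σ := by
  funext d k
  simp [twistedShift_iterate_apply]

theorem twistedShift_iterate_mul (i : ℕ) :
    (twistedShift σ N)^[N * i] = Pi.map fun _ => σ^[i] := by
  rw [Function.iterate_mul, twistedShift_iterate_self, Pi.map_iterate]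

end Iterate

/-- The splitting of a word of length `n * t` into its `t` residue classes modulo `t`: letter `q` of
class `r` is letter `r + t * q` of the word. -/
def residueSplit (n t : ℕ) : (Fin (n * t) → α) ≃ (Fin t → Fin n → α) :=
  (finProdFinEquiv.symm.arrowCongr (Equiv.refl α)).trans
    ((Equiv.curry _ _ _).trans (Equiv.piComm _))

theorem residueSplit_apply (n t : ℕ) (d : Fin (n * t) → α) (r : Fin t) (q : Fin n) :
    residueSplit n t d r q = d ⟨r + t * q, (finProdFinEquiv (q, r)).isLt⟩ :=
  rfl

theorem semiconj_residueSplit_twistedShift (σ : α → α) (n t : ℕ) :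
    Function.Semiconj (residueSplit n t) (twistedShift σ (n * t))
      (twistedShift (twistedShift σ n) t) := by
  intro d
  funext ⟨r, hr⟩ ⟨q, hq⟩
  rcases r with _ | r
  · rcases q with _ | q
    · have last_index : n * t - 1 = t - 1 + t * (n - 1) := by
        obtain ⟨m, rfl⟩ := Nat.exists_eq_add_one.mpr hq
        grind
      simp [residueSplit_apply, twistedShift, last_index]
    · have index_pred : t * (q + 1) - 1 = t - 1 + t * q := by grind
      simp [residueSplit_apply, twistedShift, index_pred, hr.ne']
  · simp [residueSplit_apply, twistedShift, Nat.add_right_comm]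

theorem twistedShift_iterate_mul_eq_self_iff (σ : α → α) (n t i : ℕ) (d : Fin (n * t) → α) :
    (twistedShift σ (n * t))^[t * i] d = d ↔
      ∀ r, (twistedShift σ n)^[i] (residueSplit n t d r) = residueSplit n t d r := by
  rw [← (residueSplit n t).injective.eq_iff,
    ((semiconj_residueSplit_twistedShift σ n t).iterate_right (t * i)).eq,
    twistedShift_iterate_mul, funext_iff]
  rfl

theorem stmt_11_general (σ : α → α) (t n i : ℕ) :
    Nat.card {d : Fin (t * n) → α // (twistedShift σ (t * n))^[t * i] d = d} =
      (Nat.card {e : Fin n → α // (twistedShift σ n)^[i] e = e}) ^ t := by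
  have fixedPoints_equiv : {d : Fin (n * t) → α // (twistedShift σ (n * t))^[t * i] d = d} ≃
      (Fin t → {e : Fin n → α // (twistedShift σ n)^[i] e = e}) :=
    ((residueSplit n t).subtypeEquiv (twistedShift_iterate_mul_eq_self_iff σ n t i)).trans
      (Equiv.subtypePiEquivPi (p := fun _ e => (twistedShift σ n)^[i] e = e))
  rw [Nat.mul_comm t n, Nat.card_congr fixedPoints_equiv, Nat.card_fun, Nat.card_fin]

/-- for positive `t, n', i'` and `n = t·n'`, `i = t·i'`, the number of fixed
points of `ζ_n^i` on `{±1}^n` is the `t`-th power of the number of fixed points of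
`ζ_{n'}^{i'}` on `{±1}^{n'}`. -/
theorem stmt_11 (t n' i' : ℕ) (ht : 0 < t) (hn' : 0 < n') (hi' : 0 < i') :
    Nat.card {d : Fin (t * n') → ℤˣ // (zeta (t * n'))^[t * i'] d = d} =
      (Nat.card {e : Fin n' → ℤˣ // (zeta n')^[i'] e = e}) ^ t := by
  simpa only [zeta_eq_twistedShift] using stmt_11_general Neg.neg t n' i'
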